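/- arXiv:2605.19486 — 2 statements merged into one kernel-verified Lean document; each statement's English description precedes it below -/
import Mathlib

section
/- Let p > 3 be a prime and let c, d be integers with Legendre symbol (d/p) = -1. Then the determinant of the p×p integer matrix whose (i,j) entry (for 0 ≤ i, j ≤ p-1) is (i² + c·i·j + d·j²)^(p-2) is congruent to 0 modulo p². -/
/-!
Modulo `p` the `(i, j)` entry is the inverse of `f(i, j) = i² + c i j + d j²` (with `0⁻¹ = 0`), so the
matrix is considered over `ZMod p`, and `p²` divides the determinant as soon as the kernel modulo `p`
has dimension at least two (`sq_dvd_det_of_kernel`). Let `χ` be the quadratic character. Two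
independent kernel vectors are available.

* `v₁(j) = 1` for `j ≠ 0` and `v₁(0) = -∑_{s ≠ 0} f(1, s)⁻¹`. For `i ≠ 0`, the substitution `j = i s`
  and the homogeneity of `f` give `(M v₁)(i) = 0`; for `i = 0` one needs `∑_{j ≠ 0} j⁻² = 0`, which
  holds for `p > 3`.
* `v₂(j) = j χ(j)`. The same substitution reduces the case `i ≠ 0` to `∑_s f(1, s)⁻¹ s χ(s) = 0`.
  The involution `s ↦ (d s)⁻¹`, for which `f(1, (d s)⁻¹) = f(1, s) / (d s²)`, changes the sign of this
  sum because `χ(d) = -1`. The case `i = 0` is `∑_j j⁻¹ χ(j) = 0`.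

The vector `v₂ - v₁` vanishes at `1` and equals `±2 - 1 ≠ 0` at `2`, whereas `v₁(1) = 1`; this triangular
shape is the form of independence that the determinant argument uses.
-/

/-- If an integer matrix kills modulo `p` two vectors that are independent modulo `p`, then `p²`
divides its determinant. Independence is given in triangular form on the coordinates `a` and `b`.
The proof replaces the columns `a` and `b` by the combinations with coefficients `u` and `w`. -/
lemma sq_dvd_det_of_kernel {n : Type*} [Fintype n] [DecidableEq n] (p : ℕ) (hp : p.Prime)
    (A : Matrix n n ℤ) (u w : n → ℤ) (a b : n) (hab : a ≠ b)
    (hua : ¬ (p : ℤ) ∣ u a) (hwa : w a = 0) (hwb : ¬ (p : ℤ) ∣ w b)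
    (hu : ∀ k, (p : ℤ) ∣ ∑ i, u i * A k i) (hw : ∀ k, (p : ℤ) ∣ ∑ i, w i * A k i) :
    (p : ℤ) ^ 2 ∣ A.det := by
  choose x hx using hu
  choose y hy using hw
  have h1 := Matrix.det_updateCol_sum A a u
  have h2 := Matrix.det_updateCol_sum (A.updateCol a (fun k => ∑ i, u i • A k i)) b w
  have e1 : (fun k => ∑ i, u i • A k i) = (p : ℤ) • x := by
    funext k; simp [hx]
  have e2 : (fun k => ∑ i, w i • (A.updateCol a ((p : ℤ) • x)) k i) = (p : ℤ) • y := by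
    funext k
    rw [Pi.smul_apply, smul_eq_mul, ← hy]
    refine Finset.sum_congr rfl fun i _ => ?_
    by_cases hi : i = a
    · subst hi; simp [hwa]
    · simp [Matrix.updateCol_ne hi]
  rw [h1, e1, e2, Matrix.det_updateCol_smul, Matrix.updateCol_comm _ hab,
    Matrix.det_updateCol_smul] at h2
  simp only [smul_eq_mul] at h2
  have hpp : Prime (p : ℤ) := Nat.prime_iff_prime_int.mp hp
  have hcop : IsCoprime ((p : ℤ) ^ 2) (w b * u a) :=
    (IsCoprime.mul_right ((hpp.coprime_iff_not_dvd).2 hwb)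
      ((hpp.coprime_iff_not_dvd).2 hua)).pow_left
  refine hcop.dvd_of_dvd_mul_left ?_
  rw [mul_assoc, ← h2, ← mul_assoc, ← sq]
  exact dvd_mul_right _ _

section field

variable {F : Type*} [Field F] [Fintype F]

lemma sum_mul_left_eq (g : F → F) {a : F} (ha : a ≠ 0) : ∑ j, g (a * j) = ∑ j, g j :=
  Fintype.sum_equiv (Equiv.mulLeft₀ a ha) _ _ (fun _ => rfl)

variable [DecidableEq F]

/-- The vector `j χ(j)` lies in the kernel; for `i ≠ 0` this rests on the involution `s ↦ (d s)⁻¹`. -/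
lemma kernel_char (c d : F) (h2 : (2 : F) ≠ 0) (h3 : (3 : F) ≠ 0)
    (hd : quadraticChar F d = -1) (i : F) :
    ∑ j, j * (quadraticChar F j : F) * (i ^ 2 + c * i * j + d * j ^ 2)⁻¹ = 0 := by
  have hd0 : d ≠ 0 := by rintro rfl; simp at hd
  rcases eq_or_ne i 0 with rfl | hi
  · have hs := sum_mul_left_eq
      (fun j : F => j * (quadraticChar F j : F) * (0 ^ 2 + c * 0 * j + d * j ^ 2)⁻¹) h2
    set T := ∑ j : F, j * (quadraticChar F j : F) * (0 ^ 2 + c * 0 * j + d * j ^ 2)⁻¹ with hT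
    have key : ∑ j : F, (2 * j) * (quadraticChar F (2 * j) : F) *
        (0 ^ 2 + c * 0 * (2 * j) + d * (2 * j) ^ 2)⁻¹ = (quadraticChar F 2 : F) / 2 * T := by
      rw [hT, Finset.mul_sum]
      refine Finset.sum_congr rfl fun j _ => ?_
      rcases eq_or_ne j 0 with rfl | hj
      · simp
      · rw [map_mul]; push_cast; simp; field_simp
    rw [key] at hs
    -- `T = ±T / 2`, and neither sign allows `T ≠ 0` when `2` and `3` are invertible.
    rcases quadraticChar_dichotomy h2 with h | h <;> rw [h] at hs <;> push_cast at hs <;>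
      field_simp at hs
    · linear_combination -hs
    · have : 3 * T = 0 := by linear_combination -hs
      exact (mul_eq_zero.1 this).resolve_left h3
  · rw [← sum_mul_left_eq _ hi]
    have hS : ∑ s, s * (quadraticChar F s : F) * (1 + c * s + d * s ^ 2)⁻¹ = 0 := by
      set S := ∑ s, s * (quadraticChar F s : F) * (1 + c * s + d * s ^ 2)⁻¹ with hSdef
      have hneg : S = -S := by
        conv_lhs => rw [hSdef, ← sum_mul_left_eq _ (inv_ne_zero hd0)]
        rw [← Equiv.sum_comp (Equiv.inv F), hSdef, ← Finset.sum_neg_distrib]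
        refine Finset.sum_congr rfl fun s _ => ?_
        rcases eq_or_ne s 0 with rfl | hs
        · simp
        · have hq : (quadraticChar F (d⁻¹ * s⁻¹) : F) = -(quadraticChar F s : F) := by
            have : d⁻¹ * s⁻¹ = (d * s) * ((d * s)⁻¹) ^ 2 := by field_simp
            rw [this, map_mul, map_mul, hd, quadraticChar_sq_one' (by positivity)]
            push_cast; ring
          have hf : 1 + c * (d⁻¹ * s⁻¹) + d * (d⁻¹ * s⁻¹) ^ 2
              = (1 + c * s + d * s ^ 2) * (d * s ^ 2)⁻¹ := by field_simp; ring
          simp only [Equiv.inv_apply]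
          rw [hq, hf, mul_inv, inv_inv]
          field_simp
      have : 2 * S = 0 := by linear_combination hneg
      exact (mul_eq_zero.1 this).resolve_left h2
    calc _ = ∑ s, (quadraticChar F i : F) / i *
          (s * (quadraticChar F s : F) * (1 + c * s + d * s ^ 2)⁻¹) := by
          refine Finset.sum_congr rfl fun s _ => ?_
          have hf : i ^ 2 + c * i * (i * s) + d * (i * s) ^ 2
              = i ^ 2 * (1 + c * s + d * s ^ 2) := by ring
          rw [hf, map_mul, mul_inv]; push_cast; field_simp
      _ = 0 := by rw [← Finset.mul_sum, hS, mul_zero]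

/-- The value at `0` that completes the constant vector `1` on `F \ {0}` to a kernel vector. -/
def kernelConst (c d : F) : F := -∑ s : F, if s = 0 then 0 else (1 + c * s + d * s ^ 2)⁻¹

lemma kernel_const (c d : F) (h2 : (2 : F) ≠ 0) (h3 : (3 : F) ≠ 0) (i : F) :
    ∑ j, (if j = 0 then kernelConst c d else 1) * (i ^ 2 + c * i * j + d * j ^ 2)⁻¹ = 0 := by
  have split : ∑ j, (if j = 0 then kernelConst c d else 1) * (i ^ 2 + c * i * j + d * j ^ 2)⁻¹
      = kernelConst c d * (i ^ 2)⁻¹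
        + ∑ j, if j = 0 then 0 else (i ^ 2 + c * i * j + d * j ^ 2)⁻¹ := by
    have : kernelConst c d * (i ^ 2)⁻¹
        = ∑ j : F, if j = 0 then kernelConst c d * (i ^ 2)⁻¹ else 0 := by simp
    rw [this, ← Finset.sum_add_distrib]
    refine Finset.sum_congr rfl fun j _ => ?_
    split_ifs with h <;> simp [h]
  rw [split]
  rcases eq_or_ne i 0 with rfl | hi
  · have hs := sum_mul_left_eq
      (fun j : F => if j = 0 then 0 else (0 ^ 2 + c * 0 * j + d * j ^ 2)⁻¹) h2
    set U := ∑ j : F, if j = 0 then 0 else (0 ^ 2 + c * 0 * j + d * j ^ 2)⁻¹ with hU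
    have key : (∑ j : F, if 2 * j = 0 then 0 else
        (0 ^ 2 + c * 0 * (2 * j) + d * (2 * j) ^ 2)⁻¹) = (2 ^ 2)⁻¹ * U := by
      rw [hU, Finset.mul_sum]
      refine Finset.sum_congr rfl fun j _ => ?_
      rcases eq_or_ne j 0 with rfl | hj
      · simp
      · simp only [hj, h2, mul_eq_zero, or_self, if_false]
        rw [← mul_inv]; congr 1; ring
    rw [key] at hs
    field_simp at hs
    have : 3 * U = 0 := by linear_combination -hs
    simp [(mul_eq_zero.1 this).resolve_left h3]
  · rw [← sum_mul_left_eq _ hi, kernelConst, neg_mul, Finset.sum_mul, neg_add_eq_zero]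
    refine Finset.sum_congr rfl fun s _ => ?_
    rcases eq_or_ne s 0 with rfl | hs
    · simp
    · simp only [hs, hi, mul_eq_zero, or_self, if_false]
      rw [← mul_inv]; congr 1; ring

end field

/-- Sums over `Fin p` of functions of the residue are sums over `ZMod p`. -/
lemma sum_fin_eq_sum_zmod (p : ℕ) [Fact p.Prime] (g : ZMod p → ZMod p) :
    ∑ i : Fin p, g (i.val : ZMod p) = ∑ x, g x := by
  have hinj : Function.Injective (fun i : Fin p => (i.val : ZMod p)) := by
    intro i j h
    have h' := (ZMod.natCast_eq_natCast_iff' _ _ _).1 h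
    rw [Nat.mod_eq_of_lt i.2, Nat.mod_eq_of_lt j.2] at h'
    exact Fin.ext h'
  exact Fintype.sum_bijective _
    ((Fintype.bijective_iff_injective_and_card _).2 ⟨hinj, by simp [ZMod.card]⟩) _ _ (fun _ => rfl)

theorem sun_determinant_prime (p : ℕ) (hp : p.Prime) (hp3 : 3 < p) (c d : ℤ)
    (hd : @legendreSym p ⟨hp⟩ d = -1) :
    ((p : ℤ))^2 ∣
      (Matrix.of fun i j : Fin p =>
        ((i.val : ℤ)^2 + c * i.val * j.val + d * (j.val : ℤ)^2)^(p-2)).det := by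
  have : Fact p.Prime := ⟨hp⟩
  have hnz : ∀ m : ℕ, 0 < m → m < p → ((m : ℕ) : ZMod p) ≠ 0 := by
    intro m h0 hm h
    exact absurd (Nat.le_of_dvd h0 ((ZMod.natCast_eq_zero_iff _ _).1 h)) (by omega)
  have h2 : (2 : ZMod p) ≠ 0 := by exact_mod_cast hnz 2 (by omega) (by omega)
  have h3 : (3 : ZMod p) ≠ 0 := by exact_mod_cast hnz 3 (by omega) (by omega)
  have hd' : quadraticChar (ZMod p) (d : ZMod p) = -1 := hd
  have hinv : ∀ x : ZMod p, x ^ (p - 2) = x⁻¹ := by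
    intro x
    rcases eq_or_ne x 0 with rfl | hx
    · rw [inv_zero, zero_pow (by omega)]
    · refine eq_inv_of_mul_eq_one_left ?_
      rw [← pow_succ, show p - 2 + 1 = p - 1 by omega, ZMod.pow_card_sub_one_eq_one hx]
  -- `v₁` and `v₂ - v₁` over `ZMod p`, lifted to integer vectors through `ZMod.val`.
  let v : ZMod p → ZMod p := fun j =>
    if j = 0 then kernelConst (c : ZMod p) (d : ZMod p) else 1
  let w : ZMod p → ZMod p := fun j => j * (quadraticChar (ZMod p) j : ZMod p) - v j
  have lift : ∀ (g : ZMod p → ZMod p),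
      (∀ i : ZMod p, ∑ j, g j * (i ^ 2 + c * i * j + d * j ^ 2)⁻¹ = 0) → ∀ k : Fin p,
      (p : ℤ) ∣ ∑ j : Fin p, ((g (j.val : ZMod p)).val : ℤ) * (Matrix.of fun i j : Fin p =>
        ((i.val : ℤ)^2 + c * i.val * j.val + d * (j.val : ℤ)^2)^(p-2)) k j := by
    intro g hg k
    rw [← ZMod.intCast_zmod_eq_zero_iff_dvd]
    rw [← hg (k.val : ZMod p), ← sum_fin_eq_sum_zmod p]
    push_cast
    refine Finset.sum_congr rfl fun j _ => ?_
    simp [hinv]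
  have ndvd : ∀ x : ZMod p, x ≠ 0 → ¬ (p : ℤ) ∣ (x.val : ℤ) := by
    intro x hx h
    rw [← ZMod.intCast_zmod_eq_zero_iff_dvd] at h
    exact hx (by simpa using h)
  refine sq_dvd_det_of_kernel p hp _ (fun j => ((v (j.val : ZMod p)).val : ℤ))
    (fun j => ((w (j.val : ZMod p)).val : ℤ)) ⟨1, by omega⟩ ⟨2, by omega⟩ (by simp)
    (ndvd _ ?_) ?_ (ndvd _ ?_) (lift v (kernel_const _ _ h2 h3)) (lift w ?_)
  · simp [v]
  · simp [v, w]
  · simp only [v, w, Nat.cast_ofNat, h2, if_false]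
    rcases quadraticChar_dichotomy h2 with h | h <;> rw [h] <;> push_cast <;> intro h0
    · exact one_ne_zero (α := ZMod p) (by linear_combination h0)
    · exact h3 (by linear_combination -h0)
  · intro i
    simp only [w, sub_mul, Finset.sum_sub_distrib]
    rw [kernel_char _ _ h2 h3 hd', kernel_const _ _ h2 h3, sub_zero]
end

section
/- Let p > 3 be a prime and let c, d be integers with Legendre symbol (d/p) = -1 (c and d are identified with their residues in 𝔽_p). Let M be the p×p matrix over 𝔽_p whose (i,j) entry (for 0 ≤ i, j ≤ p-1) is (a_i² + c·a_i·a_j + d·a_j²)^(p-2), where a_i denotes the residue class of i in 𝔽_p. Then the rank of M over 𝔽_p is at most p − 2. -/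
/-!
Since `a ^ (p - 2) = a⁻¹` in `𝔽_p` (also for `a = 0`), the entries are `f(x, y) = (x² + cxy + dy²)⁻¹`.
The bound follows from two linearly independent vectors in the left kernel.

* With `m = (p + 1) / 2`, the vector `v(x) = x ^ m`. For `y ≠ 0` the involution `x ↦ dy²/x` of `𝔽_p`
  turns `v(x) f(x, y)` into `(d/p) v(x) f(x, y) = -v(x) f(x, y)`, so `∑ₓ v(x) f(x, y)` is its own
  negative (`sum_pow_mul_inv_form`).
* The vector `w(x) = 1 - d C δ₀(x)` with `C = ∑ₜ f(t, 1)`: by homogeneity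
  `∑ₓ f(x, y) = C y⁻²`, while `f(0, y) = d⁻¹ y⁻²` (`sum_inv_form`).

For `y = 0` both sums are power sums over `𝔽_p` of exponent less than `p - 1`, which vanish.
Comparing values at `1` and `2`, where `v(2) = ±2`, shows that `v` and `w` are independent as `p > 3`.
-/

lemma pow_sub_two_eq_inv {p : ℕ} [Fact p.Prime] (hp3 : 3 < p) (a : ZMod p) :
    a ^ (p - 2) = a⁻¹ := by
  by_cases ha : a = 0
  · subst ha
    rw [inv_zero, zero_pow (by omega)]
  · apply eq_inv_of_mul_eq_one_left
    rw [← pow_succ, show p - 2 + 1 = p - 1 by omega]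
    exact ZMod.pow_card_sub_one_eq_one ha

lemma sum_inv_sq {p : ℕ} [Fact p.Prime] (hp3 : 3 < p) :
    ∑ x : ZMod p, (x ^ 2)⁻¹ = 0 := by
  have hp5 : p ≠ 4 := by
    rintro rfl
    exact absurd (Fact.out : Nat.Prime 4) (by norm_num)
  have h := FiniteField.sum_pow_lt_card_sub_one (K := ZMod p) 2 (by rw [ZMod.card]; omega)
  rw [← h, ← Equiv.sum_comp (Equiv.inv (ZMod p))]
  simp

/-- The vector `x ↦ x ^ ((p + 1) / 2)` lies in the left kernel. -/
lemma sum_pow_mul_inv_form {p : ℕ} [Fact p.Prime] (hp3 : 3 < p) (m : ℕ) (hm : 2 * m = p + 1)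
    (c d : ZMod p) (hd0 : d ≠ 0) (hd : d ^ m = -d) (y : ZMod p) :
    ∑ x : ZMod p, x ^ m * (x ^ 2 + c * x * y + d * y ^ 2)⁻¹ = 0 := by
  have hsq (z : ZMod p) : z ^ m * z ^ m = z ^ 2 := by
    rw [← pow_add, ← two_mul, hm, pow_succ, ZMod.pow_card, sq]
  by_cases hy : y = 0
  · subst hy
    refine Eq.trans (Finset.sum_congr rfl fun x _ => ?_)
      (FiniteField.sum_pow_lt_card_sub_one (K := ZMod p) (m - 2) (by rw [ZMod.card]; omega))
    by_cases hx : x = 0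
    · subst hx
      rw [zero_pow (show m ≠ 0 by omega), zero_pow (show m - 2 ≠ 0 by omega), zero_mul]
    · have : x ^ m = x ^ (m - 2) * x ^ 2 := by
        rw [← pow_add]
        congr 1
        omega
      rw [this, mul_zero, zero_pow two_ne_zero, mul_zero, add_zero, add_zero,
        mul_inv_cancel_right₀ (pow_ne_zero 2 hx)]
  · have hk : d * y ^ 2 ≠ 0 := mul_ne_zero hd0 (pow_ne_zero 2 hy)
    have hinv : Function.Involutive (fun x : ZMod p => d * y ^ 2 * x⁻¹) := by
      intro x
      by_cases hx : x = 0
      · simp [hx]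
      · field_simp
    have h2 : (2 : ZMod p) ≠ 0 := by
      intro h
      have := (ZMod.natCast_eq_zero_iff 2 p).1 (by exact_mod_cast h)
      have := Nat.le_of_dvd (by norm_num) this
      omega
    set F : ZMod p → ZMod p := fun x => x ^ m * (x ^ 2 + c * x * y + d * y ^ 2)⁻¹ with hF
    have hneg (x : ZMod p) : F (d * y ^ 2 * x⁻¹) = - F x := by
      by_cases hx : x = 0
      · subst hx
        simp [hF, show m ≠ 0 by omega]
      · have h1 : (d * y ^ 2 * x⁻¹) ^ m = - (d * y ^ 2) * (x ^ m * (x ^ 2)⁻¹) := by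
          have hxm : x ^ m ≠ 0 := pow_ne_zero m hx
          rw [mul_pow, mul_pow, hd, inv_pow, ← pow_mul, mul_comm 2 m, pow_mul, sq (y ^ m), hsq,
            ← hsq x]
          field_simp
        have h3 : (d * y ^ 2 * x⁻¹) ^ 2 + c * (d * y ^ 2 * x⁻¹) * y + d * y ^ 2
            = d * y ^ 2 * (x ^ 2)⁻¹ * (x ^ 2 + c * x * y + d * y ^ 2) := by
          field_simp
          ring
        simp only [hF]
        rw [h1, h3, mul_inv, mul_inv, inv_inv]
        field_simp
    have hS : ∑ x, F x = - ∑ x, F x := by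
      rw [← Finset.sum_neg_distrib, ← Equiv.sum_comp hinv.toPerm F]
      exact Finset.sum_congr rfl fun x _ => hneg x
    have : 2 * ∑ x, F x = 0 := by linear_combination hS
    exact (mul_eq_zero.1 this).resolve_left h2

/-- Homogeneity in `(x, y)` determines every column sum from the one at `y = 1`. -/
lemma sum_inv_form {p : ℕ} [Fact p.Prime] (hp3 : 3 < p) (c d y : ZMod p) :
    ∑ x : ZMod p, (x ^ 2 + c * x * y + d * y ^ 2)⁻¹
      = (∑ t : ZMod p, (t ^ 2 + c * t + d)⁻¹) * (y ^ 2)⁻¹ := by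
  by_cases hy : y = 0
  · subst hy
    simpa using sum_inv_sq hp3
  · rw [← Equiv.sum_comp (Equiv.mulRight₀ y hy), Finset.sum_mul]
    refine Finset.sum_congr rfl fun t _ => ?_
    rw [← mul_inv]
    congr 1
    simp only [Equiv.mulRight₀_apply]
    ring

lemma natCast_fin_bijective (p : ℕ) [NeZero p] :
    Function.Bijective (fun i : Fin p => (i.val : ZMod p)) := by
  constructor
  · intro i j h
    have := congrArg ZMod.val h
    simp only [ZMod.val_natCast, Nat.mod_eq_of_lt i.2, Nat.mod_eq_of_lt j.2] at this
    exact Fin.ext this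
  · intro x
    exact ⟨⟨x.val, x.val_lt⟩, ZMod.natCast_zmod_val x⟩

theorem reduced_matrix_rank (p : ℕ) (hp : p.Prime) (hp3 : 3 < p)
    (c d : ℤ) (hd : @legendreSym p ⟨hp⟩ d = -1) :
    (Matrix.of fun i j : Fin p =>
      (((i.val : ZMod p))^2 + (c : ZMod p) * (i.val : ZMod p) * (j.val : ZMod p)
        + (d : ZMod p) * ((j.val : ZMod p))^2)^(p-2)).rank ≤ p - 2 := by
  have : Fact p.Prime := ⟨hp⟩
  set M : Matrix (Fin p) (Fin p) (ZMod p) := Matrix.of fun i j : Fin p =>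
      (((i.val : ZMod p))^2 + (c : ZMod p) * (i.val : ZMod p) * (j.val : ZMod p)
        + (d : ZMod p) * ((j.val : ZMod p))^2)^(p-2) with hM
  obtain ⟨m, hm⟩ : ∃ m, 2 * m = p + 1 := by
    obtain ⟨k, hk⟩ := hp.odd_of_ne_two (by omega)
    exact ⟨k + 1, by omega⟩
  have hd0 : (d : ZMod p) ≠ 0 := by
    intro h
    rw [(legendreSym.eq_zero_iff p d).2 h] at hd
    norm_num at hd
  have hdm : (d : ZMod p) ^ m = -d := by
    have h := legendreSym.eq_pow p d
    rw [hd] at h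
    rw [show m = p / 2 + 1 by omega, pow_succ, ← h]
    push_cast
    ring
  set C : ZMod p := ∑ t : ZMod p, (t ^ 2 + c * t + d)⁻¹ with hC
  let v : ZMod p → ZMod p := fun x => x ^ m
  let w : ZMod p → ZMod p := fun x => 1 - if x = 0 then d * C else 0
  let e : Fin p → ZMod p := fun i => (i.val : ZMod p)
  have he : Function.Bijective e := natCast_fin_bijective p
  have hmul (u : ZMod p → ZMod p) (j : Fin p) : (M.transpose.mulVec (u ∘ e)) j
      = ∑ x : ZMod p, u x * (x ^ 2 + c * x * e j + d * e j ^ 2)⁻¹ := by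
    rw [← he.sum_comp]
    simp only [Matrix.mulVec, dotProduct, Matrix.transpose_apply, hM, Matrix.of_apply,
      pow_sub_two_eq_inv hp3]
    exact Finset.sum_congr rfl fun i _ => mul_comm _ _
  have hv : M.transpose.mulVec (v ∘ e) = 0 := by
    funext j
    rw [hmul]
    exact sum_pow_mul_inv_form hp3 m hm c d hd0 hdm (e j)
  have hw : M.transpose.mulVec (w ∘ e) = 0 := by
    funext j
    rw [hmul]
    simp only [w, sub_mul, one_mul, Finset.sum_sub_distrib, ite_mul, zero_mul,
      Finset.sum_ite_eq', Finset.mem_univ, if_true]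
    rw [sum_inv_form hp3, ← hC, mul_zero, zero_mul, zero_pow two_ne_zero, zero_add, zero_add,
      mul_inv]
    simp only [Pi.zero_apply]
    rw [show (d : ZMod p) * C * ((d : ZMod p)⁻¹ * (e j ^ 2)⁻¹)
      = (d * (d : ZMod p)⁻¹) * (C * (e j ^ 2)⁻¹) by ring, mul_inv_cancel₀ hd0, one_mul, sub_self]
  have hnat (n : ℕ) (hn0 : 0 < n) (hn : n < p) : (n : ZMod p) ≠ 0 := fun h =>
    Nat.not_dvd_of_pos_of_lt hn0 hn ((ZMod.natCast_eq_zero_iff n p).1 h)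
  have h2 : (2 : ZMod p) ≠ 0 := by exact_mod_cast hnat 2 (by norm_num) (by omega)
  have h3 : (3 : ZMod p) ≠ 0 := by exact_mod_cast hnat 3 (by norm_num) hp3
  have hli : LinearIndependent (ZMod p) ![v ∘ e, w ∘ e] := by
    rw [LinearIndependent.pair_iff]
    intro a b hab
    have hx (x : ZMod p) (hx0 : x ≠ 0) : a * x ^ m + b = 0 := by
      obtain ⟨i, rfl⟩ := he.2 x
      have := congrFun hab i
      simpa [v, w, hx0] using this
    have h1 := hx 1 one_ne_zero
    rw [one_pow, mul_one] at h1
    have h22 := hx 2 h2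
    have hsq : ((2 : ZMod p) ^ m - 2) * ((2 : ZMod p) ^ m + 2) = 0 := by
      have : (2 : ZMod p) ^ m * 2 ^ m = 2 ^ 2 := by
        rw [← pow_add, ← two_mul, hm, pow_succ, ZMod.pow_card, sq]
      linear_combination this
    have ha : a = 0 := by
      rcases mul_eq_zero.1 hsq with h | h
      · linear_combination h22 - h1 - a * h
      · have : 3 * a = 0 := by linear_combination h1 - h22 + a * h
        exact (mul_eq_zero.1 this).resolve_left h3
    exact ⟨ha, by linear_combination h1 - ha⟩
  have hker : 2 ≤ Module.finrank (ZMod p) (LinearMap.ker M.transpose.mulVecLin) := by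
    have hspan : Submodule.span (ZMod p) (Set.range ![v ∘ e, w ∘ e])
        ≤ LinearMap.ker M.transpose.mulVecLin := by
      rw [Submodule.span_le]
      rintro _ ⟨i, rfl⟩
      fin_cases i
      · exact hv
      · exact hw
    have := Submodule.finrank_mono hspan
    rwa [finrank_span_eq_card hli, Fintype.card_fin] at this
  have hrn := LinearMap.finrank_range_add_finrank_ker M.transpose.mulVecLin
  rw [Module.finrank_pi, Fintype.card_fin] at hrn
  rw [← Matrix.rank_transpose, Matrix.rank]
  omega
end
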